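/- arXiv:1610.09879 — 2 statements merged into one kernel-verified Lean document; each statement's English description precedes it below -/
import Mathlib

section
/- If Y_j is a spherical harmonic of degree j on S^{n-1} and its homogeneous extension Q_j is the corresponding solid harmonic, then for every multi-index α with |α| ≤ j one has ‖∂^α Q_j‖_{L^2(S^{n-1})}^2 ≤ 2^{|α|} · j^{2|α|} · e^{n/2−1} · ‖Q_j‖_{L^2(S^{n-1})}^2. -/
open MeasureTheory MvPolynomial

/-- The iterated partial derivative `∂^α` of multi-index `α` acting on polynomials. -/
noncomputable def pderivMulti (n : ℕ) (α : Fin n → ℕ) :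
    MvPolynomial (Fin n) ℝ →ₗ[ℝ] MvPolynomial (Fin n) ℝ :=
  ((List.finRange n).map fun i => ((MvPolynomial.pderiv (R := ℝ) i).toLinearMap ^ (α i))).prod

/-- The surface measure on the unit sphere `S^{n-1} ⊆ ℝ^n`. -/
noncomputable def sphereMeas (n : ℕ) :
    Measure (Metric.sphere (0 : EuclideanSpace ℝ (Fin n)) 1) :=
  (volume : Measure (EuclideanSpace ℝ (Fin n))).toSphere

section Helpers

/-- Evaluation of a polynomial at a point of Euclidean space. -/
noncomputable def evE {n : ℕ} (P : MvPolynomial (Fin n) ℝ) (x : EuclideanSpace ℝ (Fin n)) : ℝ :=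
  MvPolynomial.eval (fun i => x i) P

/-- Gaussian integral of a polynomial. -/
noncomputable def gaussInt {n : ℕ} (P : MvPolynomial (Fin n) ℝ) : ℝ :=
  ∫ x : EuclideanSpace ℝ (Fin n), evE P x * Real.exp (-‖x‖ ^ 2)

/-- Sphere integral of a polynomial. -/
noncomputable def sphInt {n : ℕ} (P : MvPolynomial (Fin n) ℝ) : ℝ :=
  ∫ x : Metric.sphere (0 : EuclideanSpace ℝ (Fin n)) 1, evE P x ∂(sphereMeas n)

lemma evE_add {n : ℕ} (P R : MvPolynomial (Fin n) ℝ) (x) : evE (P + R) x = evE P x + evE R x := by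
  simp [evE]

lemma evE_mul {n : ℕ} (P R : MvPolynomial (Fin n) ℝ) (x) : evE (P * R) x = evE P x * evE R x := by
  simp [evE]

lemma continuous_evE {n : ℕ} (P : MvPolynomial (Fin n) ℝ) : Continuous (evE P) := by
  unfold evE
  have h := MvPolynomial.continuous_eval P
  exact h.comp (by fun_prop)

lemma lineDeriv_evE {n : ℕ} (P : MvPolynomial (Fin n) ℝ) (i : Fin n)
    (x : EuclideanSpace ℝ (Fin n)) :
    HasLineDerivAt ℝ (evE P) (evE (pderiv i P) x) x (EuclideanSpace.single i 1) := by
  unfold HasLineDerivAt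
  induction P using MvPolynomial.induction_on with
  | C a => simpa [evE] using hasDerivAt_const (0 : ℝ) a
  | add p q hp hq =>
    simp only [map_add, evE_add]
    exact hp.add hq
  | mul_X p k hp =>
    have hX : HasDerivAt (fun t : ℝ => evE (X k : MvPolynomial (Fin n) ℝ)
        (x + t • EuclideanSpace.single i 1)) (evE (pderiv i (X k)) x) 0 := by
      have h1 : HasDerivAt (fun t : ℝ => x k + t * (EuclideanSpace.single i (1:ℝ)) k)
          (1 * (EuclideanSpace.single i (1:ℝ)) k) 0 :=
        ((hasDerivAt_id (0:ℝ)).mul_const _).const_add _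
      by_cases hik : k = i
      · subst hik
        simpa [evE] using h1
      · simpa [evE, pderiv_X_of_ne hik, hik] using h1
    have h := hp.mul hX
    simp only [zero_smul, add_zero] at h
    rw [pderiv_mul, evE_add, evE_mul, evE_mul]
    simp only [evE_mul]
    exact h

lemma lineDeriv_gauss {n : ℕ} (i : Fin n) (x : EuclideanSpace ℝ (Fin n)) :
    HasLineDerivAt ℝ (fun y : EuclideanSpace ℝ (Fin n) => Real.exp (-‖y‖ ^ 2))
      (-(2 * x i) * Real.exp (-‖x‖ ^ 2)) x (EuclideanSpace.single i 1) := by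
  have h := (((hasStrictFDerivAt_norm_sq x).hasFDerivAt.neg).exp).hasLineDerivAt
    (EuclideanSpace.single i 1)
  have e : ((Real.exp ((-fun y : EuclideanSpace ℝ (Fin n) => ‖y‖ ^ 2) x) •
      -(2 • (innerSL ℝ) x)) (EuclideanSpace.single i 1)) = -(2 * x i) * Real.exp (-‖x‖ ^ 2) := by
    simp [EuclideanSpace.inner_single_right]
    ring
  rw [e] at h
  exact h

lemma integrable_norm_pow {n : ℕ} (hn : 2 ≤ n) (d : ℕ) :
    Integrable (fun x : EuclideanSpace ℝ (Fin n) => ‖x‖ ^ d * Real.exp (-‖x‖ ^ 2)) := by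
  have : Nontrivial (EuclideanSpace ℝ (Fin n)) := by
    apply Module.nontrivial_of_finrank_pos (R := ℝ); simp; omega
  refine (integrable_fun_norm_addHaar (volume : Measure (EuclideanSpace ℝ (Fin n)))
    (f := fun r => r ^ d * Real.exp (-r ^ 2))).2 ?_
  have h := integrableOn_rpow_mul_exp_neg_rpow (p := 2) (s := ((n - 1 + d : ℕ) : ℝ))
    (by have : (0:ℝ) ≤ ((n - 1 + d : ℕ) : ℝ) := Nat.cast_nonneg _
        linarith) two_pos
  simp only [Real.rpow_natCast, Real.rpow_two] at h
  refine h.congr_fun (fun x hx => ?_) measurableSet_Ioi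
  simp only [finrank_euclideanSpace, Fintype.card_fin, smul_eq_mul, pow_add]
  ring

lemma integrable_evE {n : ℕ} (hn : 2 ≤ n) (P : MvPolynomial (Fin n) ℝ) :
    Integrable (fun x : EuclideanSpace ℝ (Fin n) => evE P x * Real.exp (-‖x‖ ^ 2)) := by
  induction P using MvPolynomial.induction_on' with
  | add p q hp hq =>
    simp only [evE_add, add_mul]
    exact hp.add hq
  | monomial m c =>
    refine ((integrable_norm_pow hn (∑ i ∈ m.support, m i)).const_mul |c|).mono'
      (((continuous_evE _).mul (by fun_prop)).aestronglyMeasurable) ?_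
    refine Filter.Eventually.of_forall fun x => ?_
    rw [norm_mul, Real.norm_eq_abs, Real.norm_eq_abs, Real.abs_exp, ← mul_assoc]
    gcongr
    simp only [evE, eval_monomial, Finsupp.prod, abs_mul, Finset.abs_prod, abs_pow]
    gcongr
    rw [← Finset.prod_pow_eq_pow_sum]
    refine Finset.prod_le_prod (fun _ _ => by positivity) fun k _ => ?_
    gcongr
    exact PiLp.norm_apply_le x k

lemma gaussInt_add {n : ℕ} (hn : 2 ≤ n) (P R : MvPolynomial (Fin n) ℝ) :
    gaussInt (P + R) = gaussInt P + gaussInt R := by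
  unfold gaussInt
  rw [← integral_add (integrable_evE hn P) (integrable_evE hn R)]
  simp only [evE_add, add_mul]

lemma gaussInt_smul {n : ℕ} (c : ℝ) (P : MvPolynomial (Fin n) ℝ) :
    gaussInt (c • P) = c * gaussInt P := by
  unfold gaussInt
  rw [← integral_const_mul]
  simp [evE, mul_assoc]

lemma gaussInt_zero {n : ℕ} : gaussInt (0 : MvPolynomial (Fin n) ℝ) = 0 := by
  simp [gaussInt, evE]

lemma gaussInt_sum {n : ℕ} (hn : 2 ≤ n) {ι : Type*} (s : Finset ι)
    (f : ι → MvPolynomial (Fin n) ℝ) :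
    gaussInt (∑ i ∈ s, f i) = ∑ i ∈ s, gaussInt (f i) := by
  classical
  induction s using Finset.induction_on with
  | empty => simp [gaussInt_zero]
  | insert a s ha ih => rw [Finset.sum_insert ha, Finset.sum_insert ha, gaussInt_add hn, ih]

lemma gaussInt_ibp {n : ℕ} (hn : 2 ≤ n) (P : MvPolynomial (Fin n) ℝ) (i : Fin n) :
    gaussInt (pderiv i P) = 2 * gaussInt (X i * P) := by
  have e : ∀ x : EuclideanSpace ℝ (Fin n), evE P x * (-(2 * x i) * Real.exp (-‖x‖ ^ 2))
      = evE ((-2 : ℝ) • (X i * P)) x * Real.exp (-‖x‖ ^ 2) := by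
    intro x; simp [evE]; ring
  have hI : Integrable (fun x : EuclideanSpace ℝ (Fin n) =>
      evE P x * (-(2 * x i) * Real.exp (-‖x‖ ^ 2))) := by
    simp only [e]
    exact integrable_evE hn _
  have h := integral_bilinear_hasLineDerivAt_right_eq_neg_left_of_integrable
    (μ := (volume : Measure (EuclideanSpace ℝ (Fin n))))
    (f := evE P) (f' := evE (pderiv i P))
    (g := fun y : EuclideanSpace ℝ (Fin n) => Real.exp (-‖y‖ ^ 2))
    (g' := fun x => -(2 * x i) * Real.exp (-‖x‖ ^ 2))
    (v := EuclideanSpace.single i 1) (B := ContinuousLinearMap.mul ℝ ℝ)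
    (integrable_evE hn (pderiv i P)) hI
    (integrable_evE hn P) (fun x _ => lineDeriv_evE P i x) (fun x _ => lineDeriv_gauss i x)
  simp only [ContinuousLinearMap.mul_apply', e] at h
  have h2 : gaussInt ((-2 : ℝ) • (X i * P)) = - gaussInt (pderiv i P) := h
  rw [gaussInt_smul] at h2
  linarith

lemma evE_smul_hom {n d : ℕ} {P : MvPolynomial (Fin n) ℝ} (hP : P.IsHomogeneous d) (r : ℝ)
    (x : EuclideanSpace ℝ (Fin n)) : evE P (r • x) = r ^ d * evE P x := by
  simp only [evE, eval_eq, Finset.mul_sum]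
  refine Finset.sum_congr rfl fun m hm => ?_
  have hd := hP.degree_eq_sum_deg_support hm
  have hd' : ∑ i ∈ m.support, m i = d := hd.symm
  simp only [PiLp.smul_apply, smul_eq_mul, mul_pow, Finset.prod_mul_distrib,
    Finset.prod_pow_eq_pow_sum, hd']
  ring

lemma gaussInt_polar {n d : ℕ} (hn : 2 ≤ n) {P : MvPolynomial (Fin n) ℝ}
    (hP : P.IsHomogeneous d) :
    gaussInt P = sphInt P * (1 / 2 * Real.Gamma (((d : ℝ) + n) / 2)) := by
  have : Nontrivial (EuclideanSpace ℝ (Fin n)) := by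
    apply Module.nontrivial_of_finrank_pos (R := ℝ); simp; omega
  let E := EuclideanSpace ℝ (Fin n)
  let μ : Measure E := volume
  calc gaussInt P = ∫ x : ({(0 : E)}ᶜ : Set E), evE P x.1 * Real.exp (-‖x.1‖ ^ 2) ∂(μ.comap (↑)) := by
        rw [integral_subtype_comap (measurableSet_singleton _).compl
          fun x : E => evE P x * Real.exp (-‖x‖ ^ 2), restrict_compl_singleton]
        rfl
    _ = ∫ z, evE P z.1 * (z.2.1 ^ d * Real.exp (-z.2.1 ^ 2))
          ∂μ.toSphere.prod (.volumeIoiPow (Module.finrank ℝ E - 1)) := by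
        rw [← μ.measurePreserving_homeomorphUnitSphereProd.integral_comp
          (Homeomorph.measurableEmbedding _)]
        congr 1
        ext x
        have hx : ‖x.1‖ ≠ 0 := norm_ne_zero_iff.2 x.2
        have : evE P x.1 = ‖x.1‖ ^ d * evE P (‖x.1‖⁻¹ • x.1) := by
          rw [← evE_smul_hom hP, smul_smul, mul_inv_cancel₀ hx, one_smul]
        rw [this]
        simp
        ring
    _ = sphInt P * ∫ r : Set.Ioi (0 : ℝ), (r.1 ^ d * Real.exp (-r.1 ^ 2))
          ∂(.volumeIoiPow (Module.finrank ℝ E - 1)) :=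
        integral_prod_mul (fun x : Metric.sphere (0 : E) 1 => evE P x)
          (fun r : Set.Ioi (0 : ℝ) => r.1 ^ d * Real.exp (-r.1 ^ 2))
    _ = _ := by
        congr 1
        simp only [Measure.volumeIoiPow, ENNReal.ofReal]
        rw [integral_withDensity_eq_integral_smul
          ((measurable_subtype_coe.pow_const _).real_toNNReal),
          integral_subtype_comap measurableSet_Ioi fun a : ℝ ↦
            Real.toNNReal (a ^ (Module.finrank ℝ E - 1)) • (a ^ d * Real.exp (-a ^ 2))]
        have h := integral_rpow_mul_exp_neg_rpow (p := 2) (q := ((n - 1 + d : ℕ) : ℝ)) two_pos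
          (by have : (0:ℝ) ≤ ((n - 1 + d : ℕ) : ℝ) := Nat.cast_nonneg _
              linarith)
        simp only [Real.rpow_natCast, Real.rpow_two] at h
        have hc : ((n - 1 + d : ℕ) : ℝ) + 1 = (d : ℝ) + n := by
          have : n - 1 + d + 1 = d + n := by omega
          exact_mod_cast this
        rw [hc] at h
        rw [← h]
        refine setIntegral_congr_fun measurableSet_Ioi fun x hx => ?_
        have hx' : (0 : ℝ) < x := hx
        simp only [NNReal.smul_def, smul_eq_mul]
        rw [Real.coe_toNNReal _ (pow_nonneg hx'.le _)]
        simp only [E, finrank_euclideanSpace, Fintype.card_fin, pow_add]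
        ring

lemma sphInt_sq_nonneg {n : ℕ} (P : MvPolynomial (Fin n) ℝ) : 0 ≤ sphInt (P ^ 2) :=
  integral_nonneg fun x => by simp only [evE, map_pow]; positivity

lemma gaussInt_sq_nonneg {n : ℕ} (P : MvPolynomial (Fin n) ℝ) : 0 ≤ gaussInt (P ^ 2) :=
  integral_nonneg fun x => by simp only [evE, map_pow]; positivity

lemma seeley {n k : ℕ} (hn : 2 ≤ n) {P : MvPolynomial (Fin n) ℝ} (hP : P.IsHomogeneous k)
    (hh : (∑ i : Fin n, pderiv i (pderiv i P)) = 0) (i : Fin n) :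
    sphInt ((pderiv i P) ^ 2) ≤ (k * (n + 2 * k - 2) : ℝ) * sphInt (P ^ 2) := by
  rcases Nat.eq_zero_or_pos k with rfl | hk
  · rw [← totalDegree_zero_iff_isHomogeneous, totalDegree_eq_zero_iff_eq_C] at hP
    rw [hP, pderiv_C]
    simp [sphInt, evE]
  · obtain ⟨k, rfl⟩ : ∃ m, k = m + 1 := ⟨k - 1, by omega⟩
    have hsum : ∑ l, gaussInt ((pderiv l P) ^ 2) = 2 * ((k + 1 : ℕ) : ℝ) * gaussInt (P ^ 2) := by
      have h1 : ∑ l, (pderiv l P) ^ 2 = ∑ l, pderiv l (P * pderiv l P) := by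
        simp only [pderiv_mul, Finset.sum_add_distrib, ← Finset.mul_sum, hh]
        simp [sq]
      rw [← gaussInt_sum hn, h1, gaussInt_sum hn]
      simp only [gaussInt_ibp hn]
      rw [← Finset.mul_sum, ← gaussInt_sum hn, mul_assoc, ← gaussInt_smul (((k + 1 : ℕ) : ℝ))]
      congr 2
      have : ∀ l, X l * (P * pderiv l P) = P * (X l * pderiv l P) := fun l => by ring
      simp only [this]
      rw [← Finset.mul_sum, hP.sum_X_mul_pderiv, sq, ← Nat.cast_smul_eq_nsmul ℝ, mul_smul_comm]
    have hle : gaussInt ((pderiv i P) ^ 2) ≤ 2 * ((k + 1 : ℕ) : ℝ) * gaussInt (P ^ 2) := by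
      rw [← hsum]
      exact Finset.single_le_sum (f := fun l => gaussInt ((pderiv l P) ^ 2))
        (fun l _ => gaussInt_sq_nonneg _) (Finset.mem_univ i)
    have hd : (pderiv i P).IsHomogeneous k := hP.pderiv
    rw [gaussInt_polar hn (hd.pow 2), gaussInt_polar hn (hP.pow 2)] at hle
    have hpos : (0 : ℝ) < (((k * 2 : ℕ) : ℝ) + n) / 2 := by
      have : (0 : ℝ) < n := by exact_mod_cast (by omega : 0 < n)
      positivity
    have hG := Real.Gamma_add_one hpos.ne'
    have hG0 := Real.Gamma_pos_of_pos hpos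
    have e : ((((k + 1) * 2 : ℕ) : ℝ) + n) / 2 = (((k * 2 : ℕ) : ℝ) + n) / 2 + 1 := by
      push_cast; ring
    rw [e, hG] at hle
    set G := Real.Gamma ((((k * 2 : ℕ) : ℝ) + n) / 2)
    refine le_of_mul_le_mul_right ?_ (by positivity : (0 : ℝ) < 1 / 2 * G)
    refine hle.trans (le_of_eq ?_)
    push_cast
    ring

/-- Solid harmonics of degree at most `j`. -/
def SolidHarm (n j : ℕ) (P : MvPolynomial (Fin n) ℝ) : Prop :=
  (∃ k ≤ j, P.IsHomogeneous k) ∧ (∑ i : Fin n, pderiv i (pderiv i P)) = 0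

lemma pderiv_comm' {n : ℕ} (i k : Fin n) (P : MvPolynomial (Fin n) ℝ) :
    pderiv i (pderiv k P) = pderiv k (pderiv i P) := by
  classical
  have h : ⁅(pderiv (R := ℝ) i), (pderiv (R := ℝ) k)⁆ = 0 := by
    refine MvPolynomial.derivation_ext (A := MvPolynomial (Fin n) ℝ) ?_
    intro l
    simp [Derivation.commutator_apply, pderiv_X, Pi.single_apply]
    split_ifs <;> simp
  have := congrArg (fun D => D P) h
  simpa [Derivation.commutator_apply, sub_eq_zero] using this

lemma SolidHarm.pderiv {n j : ℕ} {P : MvPolynomial (Fin n) ℝ} (h : SolidHarm n j P) (i : Fin n) :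
    SolidHarm n j (pderiv i P) := by
  obtain ⟨⟨k, hk, hP⟩, hh⟩ := h
  refine ⟨⟨k - 1, by omega, hP.pderiv⟩, ?_⟩
  simp only [fun l => pderiv_comm' l i P, fun l => pderiv_comm' l i (MvPolynomial.pderiv l P)]
  rw [← map_sum, hh, map_zero]

lemma SolidHarm.step {n j : ℕ} (hn : 2 ≤ n) {P : MvPolynomial (Fin n) ℝ} (h : SolidHarm n j P)
    (i : Fin n) :
    sphInt ((MvPolynomial.pderiv i P) ^ 2) ≤ (j * (n + 2 * j - 2) : ℝ) * sphInt (P ^ 2) := by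
  obtain ⟨⟨k, hk, hP⟩, hh⟩ := h
  refine (seeley hn hP hh i).trans ?_
  have h0 := sphInt_sq_nonneg P
  have hk' : (k : ℝ) ≤ j := by exact_mod_cast hk
  have hn' : (2 : ℝ) ≤ n := by exact_mod_cast hn
  have hk0 : (0 : ℝ) ≤ k := Nat.cast_nonneg _
  refine mul_le_mul_of_nonneg_right ?_ h0
  exact mul_le_mul hk' (by linarith) (by linarith) (by linarith)

lemma SolidHarm.iter {n j : ℕ} (hn : 2 ≤ n) (i : Fin n) (a : ℕ)
    {P : MvPolynomial (Fin n) ℝ} (h : SolidHarm n j P) :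
    SolidHarm n j (((MvPolynomial.pderiv (R := ℝ) i).toLinearMap ^ a) P) ∧
    sphInt ((((MvPolynomial.pderiv (R := ℝ) i).toLinearMap ^ a) P) ^ 2) ≤
      (j * (n + 2 * j - 2) : ℝ) ^ a * sphInt (P ^ 2) := by
  have hn' : (2 : ℝ) ≤ n := by exact_mod_cast hn
  have hj0 : (0 : ℝ) ≤ j := Nat.cast_nonneg _
  have hc : (0 : ℝ) ≤ j * (n + 2 * j - 2) := mul_nonneg hj0 (by linarith)
  induction a with
  | zero => simpa using h
  | succ a ih =>
    rw [pow_succ', Module.End.mul_apply]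
    refine ⟨ih.1.pderiv i, (ih.1.step hn i).trans ?_⟩
    refine (mul_le_mul_of_nonneg_left ih.2 hc).trans (le_of_eq ?_)
    ring

lemma SolidHarm.list {n j : ℕ} (hn : 2 ≤ n) (α : Fin n → ℕ) (l : List (Fin n))
    {P : MvPolynomial (Fin n) ℝ} (h : SolidHarm n j P) :
    SolidHarm n j ((l.map fun i => ((MvPolynomial.pderiv (R := ℝ) i).toLinearMap ^ (α i))).prod P) ∧
    sphInt (((l.map fun i => ((MvPolynomial.pderiv (R := ℝ) i).toLinearMap ^ (α i))).prod P) ^ 2) ≤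
      (j * (n + 2 * j - 2) : ℝ) ^ (l.map α).sum * sphInt (P ^ 2) := by
  have hn' : (2 : ℝ) ≤ n := by exact_mod_cast hn
  have hj0 : (0 : ℝ) ≤ j := Nat.cast_nonneg _
  have hc : (0 : ℝ) ≤ j * (n + 2 * j - 2) := mul_nonneg hj0 (by linarith)
  induction l with
  | nil => simpa using h
  | cons b l ih =>
    simp only [List.map_cons, List.prod_cons, List.sum_cons, Module.End.mul_apply]
    have h2 := ih.1.iter hn b (α b)
    refine ⟨h2.1, h2.2.trans ?_⟩
    rw [pow_add, mul_assoc]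
    exact mul_le_mul_of_nonneg_left ih.2 (pow_nonneg hc _)

lemma const_bound {n j m : ℕ} (hn : 2 ≤ n) (hm : m ≤ j) :
    (j * (n + 2 * j - 2) : ℝ) ^ m ≤ 2 ^ m * (j : ℝ) ^ (2 * m) * Real.exp ((n : ℝ) / 2 - 1) := by
  have hn' : (2 : ℝ) ≤ n := by exact_mod_cast hn
  rcases Nat.eq_zero_or_pos j with rfl | hj
  · obtain rfl : m = 0 := by omega
    simpa using by linarith
  have hj' : (0 : ℝ) < j := by exact_mod_cast hj
  have hm' : (m : ℝ) ≤ j := by exact_mod_cast hm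
  set c : ℝ := (n : ℝ) / 2 - 1 with hcdef
  have hc : 0 ≤ c := by linarith
  have e : (j * (n + 2 * j - 2) : ℝ) = 2 * (j : ℝ) ^ 2 * (c / j + 1) := by
    rw [hcdef]; field_simp; ring
  rw [e, mul_pow, mul_pow, ← pow_mul]
  gcongr
  calc (c / j + 1) ^ m ≤ Real.exp (c / j) ^ m := by
        gcongr; exact Real.add_one_le_exp _
    _ = Real.exp (m * (c / j)) := by rw [← Real.exp_nat_mul]
    _ ≤ Real.exp c := by
        apply Real.exp_le_exp.2
        rw [mul_div_assoc', div_le_iff₀ hj']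
        nlinarith

end Helpers

/-- If `Q_j` is a solid harmonic of degree `j` on `ℝ^n` (a harmonic
homogeneous polynomial), then for every multi-index `α` with `|α| ≤ j`,
`‖∂^α Q_j‖²_{L²(S^{n-1})} ≤ 2^{|α|} · j^{2|α|} · e^{n/2−1} · ‖Q_j‖²_{L²(S^{n-1})}`. -/
theorem stmt8 (n j : ℕ) (hn : 2 ≤ n) (Q : MvPolynomial (Fin n) ℝ)
    (hhom : Q.IsHomogeneous j)
    (hharm : (∑ i : Fin n, pderiv i (pderiv i Q)) = 0)
    (α : Fin n → ℕ) (hα : ∑ i, α i ≤ j) :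
    ∫ x : Metric.sphere (0 : EuclideanSpace ℝ (Fin n)) 1,
        (MvPolynomial.eval (fun i => (x : EuclideanSpace ℝ (Fin n)) i) (pderivMulti n α Q)) ^ 2
        ∂(sphereMeas n)
      ≤ 2 ^ (∑ i, α i) * (j : ℝ) ^ (2 * ∑ i, α i) * Real.exp ((n : ℝ) / 2 - 1) *
        ∫ x : Metric.sphere (0 : EuclideanSpace ℝ (Fin n)) 1,
          (MvPolynomial.eval (fun i => (x : EuclideanSpace ℝ (Fin n)) i) Q) ^ 2
          ∂(sphereMeas n) := by
  have h := (SolidHarm.list hn α (List.finRange n) (P := Q) (j := j)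
    ⟨⟨j, le_rfl, hhom⟩, hharm⟩).2
  have hs : ((List.finRange n).map α).sum = ∑ i, α i := by
    rw [← List.ofFn_eq_map, List.sum_ofFn]
  rw [hs] at h
  have h2 := h.trans (mul_le_mul_of_nonneg_right (const_bound hn hα) (sphInt_sq_nonneg Q))
  simpa only [sphInt, evE, map_pow, pderivMulti] using h2
end

section
/- Let f be a compactly supported distribution (or non-quasianalytic ultradistribution) on S^{n-1} and let K₁ ⊂ S^{n-1} be a closed set disjoint from supp f. Then the Poisson transform P[f](rω) = ⟨f(ξ), P(rω,ξ)⟩ tends to 0 as r → 1⁻, uniformly for ω ∈ K₁; moreover there is a constant C with |P[f](rω)| ≤ C(1−r) for all ω ∈ K₁ and 1/2 ≤ r < 1. -/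
/-- The degree-0 homogeneous extension (in `ξ`) of the Poisson kernel
`ξ ↦ P(rω, ξ) = S⁻¹(1−r²)/|rω−ξ|^n` of the unit ball, with surface-area constant `S`. -/
noncomputable def poissonExt (n : ℕ) (S r : ℝ) (ω : EuclideanSpace ℝ (Fin n)) :
    EuclideanSpace ℝ (Fin n) → ℝ := fun ξ =>
  S⁻¹ * (1 - r ^ 2) / ‖r • ω - ‖ξ‖⁻¹ • ξ‖ ^ n

section aux
open scoped NNReal ENNReal

theorem aux_changeOrigin {E F : Type*} [NormedAddCommGroup E] [NormedSpace ℝ E]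
    [NormedAddCommGroup F] [NormedSpace ℝ F] (p : FormalMultilinearSeries ℝ E F) (a : ℝ≥0)
    (ha : (a + a : ℝ≥0∞) < p.radius) :
    ∃ B : ℝ≥0, ∀ y : E, ‖y‖₊ ≤ a → ∀ k, ‖p.changeOrigin y k‖₊ * a ^ k ≤ B := by
  have hs := p.changeOriginSeries_summable_aux₁ ha
  refine ⟨∑' k : ℕ, ∑' s : Σ l : ℕ, { s : Finset (Fin (k + l)) // s.card = l },
        ‖p (k + s.1)‖₊ * a ^ s.1 * a ^ k, fun y hy k => ?_⟩
  · have hy' : (‖y‖₊ : ℝ≥0∞) < p.radius :=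
      lt_of_le_of_lt ((ENNReal.coe_le_coe.2 hy).trans le_self_add) ha
    have h1 := p.nnnorm_changeOrigin_le k hy'
    have h2 : ∑' s : Σ l : ℕ, { s : Finset (Fin (k + l)) // s.card = l },
        ‖p (k + s.1)‖₊ * ‖y‖₊ ^ s.1 ≤ ∑' s : Σ l : ℕ, { s : Finset (Fin (k + l)) // s.card = l },
        ‖p (k + s.1)‖₊ * a ^ s.1 := by
      refine Summable.tsum_le_tsum (fun s => by gcongr) (p.changeOriginSeries_summable_aux₂ hy' k)
        (p.changeOriginSeries_summable_aux₂ (lt_of_le_of_lt le_self_add ha) k)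
    have h3 : (∑' s : Σ l : ℕ, { s : Finset (Fin (k + l)) // s.card = l },
        ‖p (k + s.1)‖₊ * a ^ s.1) * a ^ k ≤
        ∑' k : ℕ, ∑' s : Σ l : ℕ, { s : Finset (Fin (k + l)) // s.card = l },
        ‖p (k + s.1)‖₊ * a ^ s.1 * a ^ k := by
      rw [← NNReal.tsum_mul_right]
      exact (NNReal.summable_sigma.1 hs).2.le_tsum k (fun _ _ => zero_le)
    exact (mul_le_mul_left (h1.trans h2) _).trans h3

theorem aux_norm_iter {E F : Type*} [NormedAddCommGroup E] [NormedSpace ℝ E]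
    [NormedAddCommGroup F] [NormedSpace ℝ F] [CompleteSpace F]
    {f : E → F} {p : FormalMultilinearSeries ℝ E F} {x : E} {r : ℝ≥0∞}
    (h : HasFPowerSeriesOnBall f p x r) (k : ℕ) :
    ‖iteratedFDeriv ℝ k f x‖ ≤ k.factorial * ‖p k‖ := by
  refine ContinuousMultilinearMap.opNorm_le_bound (by positivity) fun v => ?_
  rw [h.iteratedFDeriv_eq_sum_of_completeSpace v]
  calc _ ≤ ∑ σ : Equiv.Perm (Fin k), ‖p k (fun i ↦ v (σ i))‖ := norm_sum_le _ _
    _ ≤ ∑ σ : Equiv.Perm (Fin k), ‖p k‖ * ∏ i, ‖v i‖ := by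
        refine Finset.sum_le_sum fun σ _ => ((p k).le_opNorm _).trans_eq ?_
        rw [Equiv.prod_comp σ (fun i => ‖v i‖)]
    _ = _ := by simp [Fintype.card_perm, mul_assoc]

theorem aux_local {E F : Type*} [NormedAddCommGroup E] [NormedSpace ℝ E]
    [NormedAddCommGroup F] [NormedSpace ℝ F]
    {g : E × F → ℝ} {z₀ : E × F} (hg : AnalyticAt ℝ g z₀) :
    ∃ C R : ℝ, 0 ≤ C ∧ 0 ≤ R ∧ ∀ᶠ z in nhds z₀, ∀ k : ℕ,
      ‖iteratedFDeriv ℝ k (fun ξ => g (z.1, ξ)) z.2‖ ≤ C * k.factorial * R ^ k := by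
  obtain ⟨p, r, hp⟩ := hg
  obtain ⟨b, hb0, hbr⟩ := ENNReal.lt_iff_exists_nnreal_btwn.1 hp.r_pos
  have hb0' : 0 < b := by exact_mod_cast hb0
  set a : ℝ≥0 := b / 2 with ha
  have ha0 : 0 < a := by positivity
  have haa : (a + a : ℝ≥0∞) < r := by
    rw [← ENNReal.coe_add, ha, add_halves]; exact hbr
  obtain ⟨B, hB⟩ := aux_changeOrigin p a (haa.trans_le hp.r_le)
  refine ⟨B, (a : ℝ)⁻¹, B.2, by positivity, ?_⟩
  filter_upwards [Metric.ball_mem_nhds z₀ (NNReal.coe_pos.2 ha0)] with z hz k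
  set y := z - z₀ with hy
  have hya : ‖y‖₊ ≤ a := by
    rw [mem_ball_iff_norm] at hz
    exact_mod_cast hz.le
  have h1 := hp.changeOrigin (y := y)
    (lt_of_le_of_lt ((ENNReal.coe_le_coe.2 hya).trans le_self_add) haa)
  rw [hy, add_sub_cancel, ← hy] at h1
  have h2 := h1.comp_sub (-(z.1, (0 : F)))
  have h3 : z + (-(z.1, (0 : F))) = ContinuousLinearMap.inr ℝ E F z.2 := by
    ext <;> simp
  rw [h3] at h2
  have h4 := h2.compContinuousLinearMap
  have h5 := aux_norm_iter h4 k
  have h6 : ((fun z_1 ↦ g (z_1 - -(z.1, (0 : F)))) ∘ ⇑(ContinuousLinearMap.inr ℝ E F)) =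
     fun ξ => g (z.1, ξ) := by
    ext ξ; simp
  rw [h6] at h5
  refine h5.trans ?_
  have h7 : ‖(p.changeOrigin y).compContinuousLinearMap (ContinuousLinearMap.inr ℝ E F) k‖ ≤
      ‖p.changeOrigin y k‖ := by
    refine ((p.changeOrigin y k).norm_compContinuousLinearMap_le _).trans ?_
    refine mul_le_of_le_one_right (norm_nonneg _) ?_
    exact Finset.prod_le_one (fun _ _ => norm_nonneg _)
      (fun _ _ => ContinuousLinearMap.norm_inr_le_one ℝ E F)
  have h8 : ‖p.changeOrigin y k‖ * (a : ℝ) ^ k ≤ B := by exact_mod_cast hB y hya k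
  have h9 : ‖p.changeOrigin y k‖ ≤ B * (a : ℝ)⁻¹ ^ k := by
    rw [inv_pow, ← div_eq_mul_inv, le_div_iff₀ (by positivity)]
    exact h8
  calc _ ≤ (k.factorial : ℝ) * (B * (a : ℝ)⁻¹ ^ k) := by
        gcongr; exact h7.trans h9
    _ = _ := by ring

theorem aux_compact {E F : Type*} [NormedAddCommGroup E] [NormedSpace ℝ E]
    [NormedAddCommGroup F] [NormedSpace ℝ F]
    {g : E × F → ℝ} {K : Set (E × F)} (hK : IsCompact K) (hg : ∀ z ∈ K, AnalyticAt ℝ g z) :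
    ∃ C R : ℝ, 0 ≤ C ∧ 0 ≤ R ∧ ∀ z ∈ K, ∀ k : ℕ,
      ‖iteratedFDeriv ℝ k (fun ξ => g (z.1, ξ)) z.2‖ ≤ C * k.factorial * R ^ k := by
  refine hK.induction_on (p := fun K => ∃ C R : ℝ, 0 ≤ C ∧ 0 ≤ R ∧ ∀ z ∈ K, ∀ k : ℕ,
      ‖iteratedFDeriv ℝ k (fun ξ => g (z.1, ξ)) z.2‖ ≤ C * k.factorial * R ^ k) ?_ ?_ ?_ ?_
  · exact ⟨0, 0, le_rfl, le_rfl, by simp⟩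
  · rintro s t hst ⟨C, R, hC, hR, h⟩
    exact ⟨C, R, hC, hR, fun z hz => h z (hst hz)⟩
  · rintro s t ⟨C, R, hC, hR, h⟩ ⟨C', R', hC', hR', h'⟩
    refine ⟨max C C', max R R', by positivity, by positivity, ?_⟩
    rintro z (hz | hz) k
    · refine (h z hz k).trans ?_
      gcongr <;> simp
    · refine (h' z hz k).trans ?_
      gcongr <;> simp
  · intro z hz
    obtain ⟨C, R, hC, hR, h⟩ := aux_local (hg z hz)
    exact ⟨_, mem_nhdsWithin_of_mem_nhds h, C, R, hC, hR, fun z hz => hz⟩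

theorem aux_weight (M : ℕ → ℝ) (hMpos : ∀ p, 0 < M p)
    (hM1 : ∀ p : ℕ, 1 ≤ p → (M p) ^ 2 ≤ M (p - 1) * M (p + 1))
    (hM3 : Summable fun p : ℕ => M p / M (p + 1)) (L : ℝ) (hL : 0 ≤ L) :
    ∃ C : ℝ, 0 < C ∧ ∀ k : ℕ, k.factorial * L ^ k ≤ C * M k := by
  have hanti : Antitone fun p : ℕ => M p / M (p + 1) := by
    refine antitone_nat_of_succ_le fun p => ?_
    have := hM1 (p + 1) (by omega)
    rw [div_le_div_iff₀ (hMpos _) (hMpos _)]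
    simp only [Nat.add_sub_cancel] at this
    nlinarith
  obtain ⟨N, hN⟩ : ∃ N : ℕ, ∀ k, N ≤ k → ((k : ℝ) + 1) * L * (M k / M (k + 1)) ≤ 1 := by
    have hc : 0 < 1 / (4 * (L + 1)) := by positivity
    have ht := hM3.hasSum.tendsto_sum_nat
    obtain ⟨N, hN⟩ := Metric.cauchySeq_iff'.1 ht.cauchySeq _ hc
    refine ⟨2 * N + 1, fun k hk => ?_⟩
    have h1 := hN (k + 1) (by omega)
    rw [Real.dist_eq, ← Finset.sum_range_add_sum_Ico _ (show N ≤ k + 1 by omega),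
      add_sub_cancel_left] at h1
    have h2 : ((k + 1 - N : ℕ) : ℝ) * (M k / M (k + 1)) ≤
        ∑ x ∈ Finset.Ico N (k + 1), M x / M (x + 1) := by
      have := Finset.card_nsmul_le_sum (Finset.Ico N (k + 1)) (fun x => M x / M (x + 1))
        (M k / M (k + 1)) (fun x hx => hanti (by simp at hx; omega))
      simpa using this
    have h3 := (h2.trans (le_abs_self _)).trans_lt h1
    have hm : 0 < M k / M (k + 1) := div_pos (hMpos _) (hMpos _)
    rw [lt_div_iff₀ (by positivity)] at h3
    have h4 : ((k : ℝ) + 1) ≤ 2 * ((k + 1 - N : ℕ) : ℝ) := by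
      have : k + 1 ≤ 2 * (k + 1 - N) := by omega
      exact_mod_cast this
    have h5 : ((k : ℝ) + 1) * (L * (M k / M (k + 1))) ≤
      (2 * ((k + 1 - N : ℕ) : ℝ)) * ((L + 1) * (M k / M (k + 1))) := by
      gcongr
      linarith
    nlinarith
  have hstep : ∀ k, N ≤ k → ((k + 1).factorial * L ^ (k + 1)) / M (k + 1) ≤
      (k.factorial * L ^ k) / M k := by
    intro k hk
    have h1 := hN k hk
    have h2 : ((k + 1).factorial * L ^ (k + 1)) / M (k + 1) =
      ((k.factorial * L ^ k) / M k) * (((k : ℝ) + 1) * L * (M k / M (k + 1))) := by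
      have := (hMpos k).ne'
      have := (hMpos (k + 1)).ne'
      rw [Nat.factorial_succ]; push_cast; field_simp; ring
    rw [h2]
    refine mul_le_of_le_one_right ?_ h1
    have := hMpos k
    positivity
  set u : ℕ → ℝ := fun k => (k.factorial * L ^ k) / M k with hu
  have hu0 : ∀ k, 0 ≤ u k := fun k => by
    have := hMpos k
    positivity
  refine ⟨1 + ∑ i ∈ Finset.range (N + 1), u i, by
    have : 0 ≤ ∑ i ∈ Finset.range (N + 1), u i := Finset.sum_nonneg fun i _ => hu0 i
    linarith, fun k => ?_⟩
  rw [← div_le_iff₀ (hMpos k)]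
  have hle : ∀ i, i ≤ N → u i ≤ 1 + ∑ i ∈ Finset.range (N + 1), u i := fun i hi => by
    have := Finset.single_le_sum (f := u) (fun i _ => hu0 i)
      (Finset.mem_range.2 (show i < N + 1 by omega))
    linarith
  rcases le_total k N with hk | hk
  · exact hle k hk
  · refine le_trans ?_ (hle N le_rfl)
    change u k ≤ u N
    induction k, hk using Nat.le_induction with
    | base => exact le_rfl
    | succ k hk ih => exact (hstep k hk).trans ih

theorem aux_smooth (n : ℕ) {m : WithTop ℕ∞}
    (z : EuclideanSpace ℝ (Fin n) × EuclideanSpace ℝ (Fin n))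
    (h0 : z.2 ≠ 0) (h1 : z.1 ≠ ‖z.2‖⁻¹ • z.2) :
    ContDiffAt ℝ m (fun z : EuclideanSpace ℝ (Fin n) × EuclideanSpace ℝ (Fin n) =>
      (‖z.1 - ‖z.2‖⁻¹ • z.2‖ ^ n)⁻¹) z := by
  have a1 : ContDiffAt ℝ m (fun z : EuclideanSpace ℝ (Fin n) × EuclideanSpace ℝ (Fin n) =>
      ‖z.2‖⁻¹ • z.2) z :=
    ((contDiffAt_snd.norm ℝ h0).inv (norm_ne_zero_iff.2 h0)).smul contDiffAt_snd
  have a2 := ((contDiffAt_fst.sub a1).norm ℝ (sub_ne_zero.2 h1))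
  exact (a2.pow n).inv (pow_ne_zero _ (norm_ne_zero_iff.2 (sub_ne_zero.2 h1)))

end aux

/-- Let `f` be a non-quasianalytic ultradistribution (of class `M_p`, a
weight sequence satisfying (M.1), (M.2)' and the non-quasianalyticity condition (M.3)')
on `S^{n-1}`, realized as a linear functional on test functions identified with their
degree-0 homogeneous extensions.  Assume `K₁ ⊆ S^{n-1}` is closed and disjoint from
`supp f`, i.e. there is a closed `K₂ ⊆ S^{n-1}` disjoint from `K₁` carrying `f`:
`|⟨f,φ⟩| ≤ C₁ · sup_k sup_{ξ∈K₂} h^k‖D^k φ(ξ)‖/M_k` for every test function `φ`.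
Then the Poisson transform `P[f](rω) = ⟨f, P(rω,·)⟩` tends to `0` as `r → 1⁻` uniformly
for `ω ∈ K₁`, and moreover `|P[f](rω)| ≤ C(1−r)` for `ω ∈ K₁` and `1/2 ≤ r < 1`. -/
theorem stmt17 (n : ℕ) (hn : 2 ≤ n)
    (M : ℕ → ℝ) (hMpos : ∀ p, 0 < M p) (hM0 : M 0 = 1)
    (hM1 : ∀ p : ℕ, 1 ≤ p → (M p) ^ 2 ≤ M (p - 1) * M (p + 1))
    (A H : ℝ) (hA : 1 < A) (hH : 1 < H)
    (hM2 : ∀ p : ℕ, M (p + 1) ≤ A * H ^ p * M p)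
    (hM3 : Summable fun p : ℕ => M p / M (p + 1))
    (f : (EuclideanSpace ℝ (Fin n) → ℝ) →ₗ[ℝ] ℝ)
    (K₁ K₂ : Set (EuclideanSpace ℝ (Fin n)))
    (hK₁closed : IsClosed K₁) (hK₂closed : IsClosed K₂)
    (hK₁sph : K₁ ⊆ Metric.sphere (0 : EuclideanSpace ℝ (Fin n)) 1)
    (hK₂sph : K₂ ⊆ Metric.sphere (0 : EuclideanSpace ℝ (Fin n)) 1)
    (hdisj : Disjoint K₁ K₂)
    (C₁ h : ℝ) (hC₁ : 0 < C₁) (hh : 0 < h)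
    (hcont : ∀ φ : EuclideanSpace ℝ (Fin n) → ℝ,
      ContDiffOn ℝ (⊤ : ℕ∞) φ {(0 : EuclideanSpace ℝ (Fin n))}ᶜ →
      (∀ c : ℝ, 0 < c → ∀ x, φ (c • x) = φ x) →
      ENNReal.ofReal |f φ| ≤ ENNReal.ofReal C₁ *
        ⨆ (k : ℕ), ⨆ ξ ∈ K₂, ENNReal.ofReal (h ^ k * ‖iteratedFDeriv ℝ k φ ξ‖ / M k))
    (S : ℝ) (hS : 0 < S) :
    (∃ C : ℝ, 0 < C ∧ ∀ ω ∈ K₁, ∀ r : ℝ, 1 / 2 ≤ r → r < 1 →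
      |f (poissonExt n S r ω)| ≤ C * (1 - r)) ∧
    TendstoUniformlyOn (fun (r : ℝ) (ω : EuclideanSpace ℝ (Fin n)) => f (poissonExt n S r ω))
      (fun _ => 0) (nhdsWithin 1 (Set.Iio 1)) K₁ := by
  have hK₁c : IsCompact K₁ := (isCompact_sphere _ _).of_isClosed_subset hK₁closed hK₁sph
  have hK₂c : IsCompact K₂ := (isCompact_sphere _ _).of_isClosed_subset hK₂closed hK₂sph
  have hKc : IsCompact ((Set.image (fun q : ℝ × EuclideanSpace ℝ (Fin n) => q.1 • q.2)
      (Set.Icc (1 / 2 : ℝ) 1 ×ˢ K₁)) ×ˢ K₂) :=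
    ((isCompact_Icc.prod hK₁c).image (by fun_prop)).prod hK₂c
  obtain ⟨B, R, hB, hR, hbd⟩ := aux_compact (g := fun z : EuclideanSpace ℝ (Fin n) ×
      EuclideanSpace ℝ (Fin n) => (‖z.1 - ‖z.2‖⁻¹ • z.2‖ ^ n)⁻¹) hKc (by
    rintro ⟨_, ξ⟩ ⟨⟨⟨r, ω⟩, ⟨hr, hω⟩, rfl⟩, hξ⟩
    simp only at hω hξ hr
    have hξ1 : ‖ξ‖ = 1 := by simpa using hK₂sph hξ
    have hω1 : ‖ω‖ = 1 := by simpa using hK₁sph hω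
    refine (aux_smooth n (m := (⊤ : WithTop ℕ∞)) _ ?_ ?_).analyticAt
    · intro h0
      simp only at h0
      rw [h0] at hξ1
      simp at hξ1
    · simp only [hξ1, inv_one, one_smul]
      intro he
      have h1 := congrArg norm he
      rw [norm_smul, hω1, hξ1, mul_one, Real.norm_of_nonneg (by linarith [hr.1])] at h1
      rw [h1, one_smul] at he
      exact Set.disjoint_left.1 hdisj hω (he ▸ hξ))
  obtain ⟨W, hW, hWb⟩ := aux_weight M hMpos hM1 hM3 (h * R) (by positivity)
  have main : ∀ ω ∈ K₁, ∀ r : ℝ, 1 / 2 ≤ r → r < 1 →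
      |f (poissonExt n S r ω)| ≤ (C₁ * (2 * S⁻¹ * B * W) + 1) * (1 - r) := by
    intro ω hω r hr hr1
    have hω1 : ‖ω‖ = 1 := by simpa using hK₁sph hω
    have hc0 : 0 ≤ S⁻¹ * (1 - r ^ 2) := by
      have : 0 ≤ 1 - r ^ 2 := by nlinarith
      positivity
    have hc1 : S⁻¹ * (1 - r ^ 2) ≤ 2 * S⁻¹ * (1 - r) := by
      have : S⁻¹ * (1 - r ^ 2) ≤ S⁻¹ * (2 * (1 - r)) := by
        gcongr
        nlinarith
      linarith
    have hφ : poissonExt n S r ω = (S⁻¹ * (1 - r ^ 2)) •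
        (fun ξ : EuclideanSpace ℝ (Fin n) => (‖r • ω - ‖ξ‖⁻¹ • ξ‖ ^ n)⁻¹) := by
      ext ξ
      simp [poissonExt, div_eq_mul_inv]
    have hsm : ∀ (m : WithTop ℕ∞) (ξ : EuclideanSpace ℝ (Fin n)), ξ ≠ 0 → ContDiffAt ℝ m
        (fun ξ : EuclideanSpace ℝ (Fin n) => (‖r • ω - ‖ξ‖⁻¹ • ξ‖ ^ n)⁻¹) ξ := by
      intro m ξ hξ
      refine (aux_smooth n (m := m) (r • ω, ξ) hξ ?_).comp ξ
        (contDiffAt_const.prodMk contDiffAt_id)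
      intro he
      have h1 := congrArg norm he
      simp only at h1
      rw [norm_smul, hω1, mul_one, Real.norm_of_nonneg (by linarith), norm_smul, norm_inv,
        norm_norm, inv_mul_cancel₀ (norm_ne_zero_iff.2 hξ)] at h1
      linarith
    have key := hcont (poissonExt n S r ω) (by
        intro ξ hξ
        rw [hφ]
        exact (contDiffAt_const.smul (hsm _ ξ (by simpa using hξ))).contDiffWithinAt) (by
        intro c hc x
        have : ‖c • x‖⁻¹ • c • x = ‖x‖⁻¹ • x := by
          rw [norm_smul, Real.norm_of_nonneg hc.le, mul_inv, smul_smul]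
          congr 1
          field_simp
        simp only [poissonExt, this])
    have hsup : (⨆ (k : ℕ), ⨆ ξ ∈ K₂,
        ENNReal.ofReal (h ^ k * ‖iteratedFDeriv ℝ k (poissonExt n S r ω) ξ‖ / M k)) ≤
        ENNReal.ofReal (2 * S⁻¹ * B * W * (1 - r)) := by
      refine iSup_le fun k => iSup₂_le fun ξ hξ => ENNReal.ofReal_le_ofReal ?_
      have hξ1 : ‖ξ‖ = 1 := by simpa using hK₂sph hξ
      have hξ0 : ξ ≠ 0 := by
        intro h0
        rw [h0] at hξ1
        simp at hξ1
      have hb := hbd (r • ω, ξ) ⟨⟨(r, ω), ⟨⟨hr, hr1.le⟩, hω⟩, rfl⟩, hξ⟩ k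
      simp only at hb
      rw [hφ, iteratedFDeriv_const_smul_apply (hsm _ ξ hξ0), norm_smul,
        Real.norm_of_nonneg hc0, div_le_iff₀ (hMpos k)]
      calc _ ≤ h ^ k * ((2 * S⁻¹ * (1 - r)) * (B * k.factorial * R ^ k)) := by
            have : 0 ≤ 1 - r := by linarith
            gcongr
        _ = (2 * S⁻¹ * (1 - r)) * B * (k.factorial * (h * R) ^ k) := by ring
        _ ≤ (2 * S⁻¹ * (1 - r)) * B * (W * M k) := by
            have : 0 ≤ 1 - r := by linarith
            exact mul_le_mul_of_nonneg_left (hWb k) (by positivity)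
        _ = _ := by ring
    have h1 := key.trans (mul_le_mul_right hsup _)
    have hr0 : 0 ≤ 1 - r := by linarith
    rw [← ENNReal.ofReal_mul hC₁.le, ENNReal.ofReal_le_ofReal_iff (by positivity)] at h1
    linarith
  have hCpos : 0 < C₁ * (2 * S⁻¹ * B * W) + 1 := by positivity
  refine ⟨⟨_, hCpos, main⟩, ?_⟩
  rw [Metric.tendstoUniformlyOn_iff]
  intro ε hε
  have hI : Set.Ioo (max (1 / 2) (1 - ε / (C₁ * (2 * S⁻¹ * B * W) + 1))) 1 ∈
      nhdsWithin (1 : ℝ) (Set.Iio 1) := by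
    refine Ioo_mem_nhdsLT (max_lt (by norm_num) ?_)
    have : 0 < ε / (C₁ * (2 * S⁻¹ * B * W) + 1) := by positivity
    linarith
  filter_upwards [hI] with r hr ω hω
  rw [dist_zero_left, Real.norm_eq_abs]
  have h1 := (le_max_left _ _).trans_lt hr.1
  have h2 := (le_max_right _ _).trans_lt hr.1
  refine (main ω hω r h1.le hr.2).trans_lt ?_
  have h3 : 1 - r < ε / (C₁ * (2 * S⁻¹ * B * W) + 1) := by linarith
  rw [lt_div_iff₀ hCpos] at h3
  linarith
end
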